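/- arXiv:2306.00109 — 2 statements merged into one kernel-verified Lean document; each statement's English description precedes it below -/
import Mathlib

section
/- (Existence of the gluing over a filter / strong amalgamation over a common filter.) Let B be an integral residuated lattice and F a compatible congruence filter of B such that x ∨ y ∈ B∖F for all x, y ∈ B∖F. Let C be an integral residuated lattice and G a congruence filter of C such that c < g for all c ∈ C∖G and g ∈ G. Let e be a map defined on F, injective, with image exactly G, satisfying e(1) = 1 and, for all x, y ∈ F: e(x·y) = e(x)·e(y), e(x\y) = e(x)\e(y), e(x/y) = e(x)/e(y), e(x ∨ y) = e(x) ∨ e(y), e(x ∧ y) = e(x) ∧ e(y). Then there exist an integral residuated lattice D and injective maps h : B → D and k : C → D, each preserving ∨, ∧, ·, \, / and 1, such that h(x) = k(e(x)) for all x ∈ F, h(B) ∪ k(C) = D, h(B) ∩ k(C) = h(F), and h(b) < k(c) < k(g) for all b ∈ B∖F, c ∈ C∖G, g ∈ G. -/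
/-- An integral residuated lattice: a lattice, a monoid, residuation for the two
divisions `ld x z` (i.e. `x \ z`) and `rd z y` (i.e. `z / y`), with `1` the top. -/
class IRL (α : Type*) extends Lattice α, Monoid α where
  ld : α → α → α
  rd : α → α → α
  mul_le_iff_ld : ∀ x y z : α, x * y ≤ z ↔ y ≤ ld x z
  mul_le_iff_rd : ∀ x y z : α, x * y ≤ z ↔ x ≤ rd z y
  le_one : ∀ x : α, x ≤ 1

namespace IRL

variable {α : Type*} [IRL α]

/-- `theta F x y` iff `x\y ∈ F` and `y\x ∈ F`. -/
def theta (F : Set α) (x y : α) : Prop := ld x y ∈ F ∧ ld y x ∈ F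

/-- The equivalence class `[x]_F`. -/
def cls (F : Set α) (x : α) : Set α := {y | theta F x y}

/-- A congruence filter of an IRL. -/
structure IsCongFilter (F : Set α) : Prop where
  nonempty : F.Nonempty
  upward : ∀ x ∈ F, ∀ y : α, x ≤ y → y ∈ F
  mul_mem : ∀ x ∈ F, ∀ y ∈ F, x * y ∈ F
  conjL : ∀ x ∈ F, ∀ y : α, ld y (x * y) ∈ F
  conjR : ∀ x ∈ F, ∀ y : α, rd (y * x) y ∈ F

end IRL

/-!
The gluing lives on the ordinal sum of `B ∖ F` below `C`. An element of `G` acts on `B ∖ F` by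
multiplication by the corresponding element of `F`, and every element of `C ∖ G` acts by `σ`: it
lies below all of `G`, and `σ x` is a lower bound of all products of `x` by elements of `F`.
Absorption makes these actions compatible with the product of `B ∖ F`. They are residuated because
`σ` and `γ` are adjoint: `σ x ≤ z`, `x \ z ∈ F` and `x ≤ γ z` are equivalent.
-/

open Sum Function
open scoped RightActions

universe u v

namespace IRL

section Residuation

variable {α : Type*} [IRL α]

instance : MulLeftMono α where
  elim w _ y h := (mul_le_iff_ld _ _ _).2 (h.trans ((mul_le_iff_ld w y _).1 le_rfl))

instance : MulRightMono α where
  elim w _ y h := (mul_le_iff_rd _ _ _).2 (h.trans ((mul_le_iff_rd y w _).1 le_rfl))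

theorem mul_le_left (x y : α) : x * y ≤ x := mul_le_of_le_one_right' (le_one y)

theorem mul_le_right (x y : α) : x * y ≤ y := mul_le_of_le_one_left' (le_one x)

theorem mul_ld_le (x y : α) : x * ld x y ≤ y := (mul_le_iff_ld _ _ _).2 le_rfl

theorem rd_mul_le (x y : α) : rd y x * x ≤ y := (mul_le_iff_rd _ _ _).2 le_rfl

theorem le_ld (x y : α) : y ≤ ld x y := (mul_le_iff_ld _ _ _).1 (mul_le_right x y)

theorem le_rd (x y : α) : y ≤ rd y x := (mul_le_iff_rd _ _ _).1 (mul_le_left y x)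

theorem ld_eq_one {x y : α} (h : x ≤ y) : ld x y = 1 :=
  (le_one _).antisymm ((mul_le_iff_ld _ _ _).1 (by rwa [mul_one]))

theorem rd_eq_one {x y : α} (h : x ≤ y) : rd y x = 1 :=
  (le_one _).antisymm ((mul_le_iff_rd _ _ _).1 (by rwa [one_mul]))

theorem ld_inf_self (x y : α) : ld x (x ⊓ y) = ld x y :=
  eq_of_forall_le_iff fun w => by
    simp only [← mul_le_iff_ld, le_inf_iff, and_iff_right (mul_le_left x w)]

theorem ld_sup_self (x y : α) : ld (x ⊔ y) y = ld x y :=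
  eq_of_forall_le_iff fun w => by
    rw [← mul_le_iff_ld, ← mul_le_iff_ld, mul_le_iff_rd, mul_le_iff_rd, sup_le_iff,
      and_iff_left (le_rd w y)]

end Residuation

/-- An embedding of integral residuated lattices. -/
structure IsEmbedding {α β : Type*} [IRL α] [IRL β] (f : α → β) : Prop where
  injective : Injective f
  map_sup : ∀ x y, f (x ⊔ y) = f x ⊔ f y
  map_inf : ∀ x y, f (x ⊓ y) = f x ⊓ f y
  map_mul : ∀ x y, f (x * y) = f x * f y
  map_ld : ∀ x y, f (ld x y) = ld (f x) (f y)
  map_rd : ∀ x y, f (rd x y) = rd (f x) (f y)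
  map_one : f 1 = 1

namespace IsCongFilter

variable {α : Type*} [IRL α] {F : Set α} (hF : IsCongFilter F) {x y z f : α}
include hF

theorem one_mem : (1 : α) ∈ F :=
  let ⟨x, hx⟩ := hF.nonempty
  hF.upward x hx 1 (le_one x)

theorem inf_mem (hx : x ∈ F) (hy : y ∈ F) : x ⊓ y ∈ F :=
  hF.upward _ (hF.mul_mem x hx y hy) _ (le_inf (mul_le_left x y) (mul_le_right x y))

theorem mul_notMem_left (hx : x ∉ F) (y : α) : x * y ∉ F :=
  fun h => hx (hF.upward _ h _ (mul_le_left x y))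

theorem mul_notMem_right (hy : y ∉ F) (x : α) : x * y ∉ F :=
  fun h => hy (hF.upward _ h _ (mul_le_right x y))

theorem ld_mem_of_mul_le (hf : f ∈ F) (h : x * f ≤ z) : ld x z ∈ F :=
  hF.upward f hf _ ((mul_le_iff_ld _ _ _).1 h)

theorem ld_mem_of_mem_mul_le (hf : f ∈ F) (h : f * x ≤ z) : ld x z ∈ F :=
  hF.upward _ (hF.conjL f hf x) _ ((mul_le_iff_ld _ _ _).1 ((mul_ld_le _ _).trans h))

theorem ld_mem_iff_rd_mem : ld x z ∈ F ↔ rd z x ∈ F :=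
  ⟨fun h => hF.upward _ (hF.conjR _ h x) _
      ((mul_le_iff_rd _ _ _).1 ((rd_mul_le _ _).trans (mul_ld_le _ _))),
    fun h => hF.ld_mem_of_mem_mul_le h (rd_mul_le x z)⟩

theorem ld_mem_of_le (h : x ≤ z) : ld x z ∈ F := by
  rw [ld_eq_one h]
  exact hF.one_mem

theorem ld_mem_trans (hxy : ld x y ∈ F) (hyz : ld y z ∈ F) : ld x z ∈ F := by
  refine hF.ld_mem_of_mul_le (hF.mul_mem _ hxy _ hyz) ?_
  calc
    x * (ld x y * ld y z) = x * ld x y * ld y z := (mul_assoc _ _ _).symm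
    _ ≤ y * ld y z := mul_le_mul_left (mul_ld_le x y) _
    _ ≤ z := mul_ld_le y z

theorem mem_of_ld_mem (hx : x ∈ F) (h : ld x z ∈ F) : z ∈ F :=
  hF.upward _ (hF.mul_mem _ hx _ h) _ (mul_ld_le x z)

theorem ld_notMem (hx : x ∈ F) (hz : z ∉ F) : ld x z ∉ F :=
  fun h => hz (hF.mem_of_ld_mem hx h)

theorem rd_notMem (hx : x ∈ F) (hz : z ∉ F) : rd z x ∉ F :=
  fun h => hF.ld_notMem hx hz (hF.ld_mem_iff_rd_mem.2 h)

theorem ld_mul_mul_left_mem (h : ld x y ∈ F) (w : α) : ld (w * x) (w * y) ∈ F := by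
  refine hF.ld_mem_of_mul_le h ?_
  rw [mul_assoc]
  exact mul_le_mul_right (mul_ld_le x y) w

theorem ld_mul_mul_right_mem (h : ld x y ∈ F) (w : α) : ld (x * w) (y * w) ∈ F := by
  refine hF.ld_mem_of_mem_mul_le (hF.ld_mem_iff_rd_mem.1 h) ?_
  rw [← mul_assoc]
  exact mul_le_mul_left (rd_mul_le x y) w

theorem theta_trans (hxy : theta F x y) (hyz : theta F y z) : theta F x z :=
  ⟨hF.ld_mem_trans hxy.1 hyz.1, hF.ld_mem_trans hyz.2 hxy.2⟩

theorem theta_mul_left (h : theta F x y) (w : α) : theta F (w * x) (w * y) :=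
  ⟨hF.ld_mul_mul_left_mem h.1 w, hF.ld_mul_mul_left_mem h.2 w⟩

theorem theta_mul_right (h : theta F x y) (w : α) : theta F (x * w) (y * w) :=
  ⟨hF.ld_mul_mul_right_mem h.1 w, hF.ld_mul_mul_right_mem h.2 w⟩

theorem theta_mul_mem (x : α) (hf : f ∈ F) : theta F x (x * f) :=
  ⟨hF.ld_mem_of_mul_le hf le_rfl, hF.ld_mem_of_le (mul_le_left x f)⟩

theorem theta_mem_mul (x : α) (hf : f ∈ F) : theta F x (f * x) :=
  ⟨hF.ld_mem_of_mem_mul_le hf le_rfl, hF.ld_mem_of_le (mul_le_right f x)⟩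

end IsCongFilter

/-- A compatible congruence filter, with `σ x` and `γ x` the least and the greatest element of the
class of `x`. The values of `σ` and `γ` on `F` are unconstrained. -/
structure IsCompatible {α : Type*} [IRL α] (F : Set α) (σ γ : α → α) : Prop
    extends IsCongFilter F where
  lt_of_notMem : ∀ f ∈ F, ∀ b ∉ F, b < f
  isLeast : ∀ x ∉ F, IsLeast (cls F x) (σ x)
  isGreatest : ∀ x ∉ F, IsGreatest (cls F x) (γ x)
  absorbing : ∀ b ∉ F, ∀ x ∉ F, (∃ u ∉ F, b * σ x = σ u) ∧ ∃ v ∉ F, σ x * b = σ v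

namespace IsCompatible

variable {α : Type*} [IRL α] {F : Set α} {σ γ : α → α} (hF : IsCompatible F σ γ) {x y z f : α}
include hF

theorem sigma_le_iff (hx : x ∉ F) : σ x ≤ z ↔ ld x z ∈ F := by
  refine ⟨fun h => hF.ld_mem_trans (hF.isLeast x hx).1.1 (hF.ld_mem_of_le h), fun h => ?_⟩
  have hinf : theta F x (x ⊓ z) := ⟨by rwa [ld_inf_self], hF.ld_mem_of_le inf_le_left⟩
  exact ((hF.isLeast x hx).2 hinf).trans inf_le_right

theorem le_gamma_iff (hz : z ∉ F) : x ≤ γ z ↔ ld x z ∈ F := by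
  refine ⟨fun h => hF.ld_mem_trans (hF.ld_mem_of_le h) (hF.isGreatest z hz).1.2, fun h => ?_⟩
  have hsup : theta F z (x ⊔ z) := ⟨hF.ld_mem_of_le le_sup_right, by rwa [ld_sup_self]⟩
  exact le_sup_left.trans ((hF.isGreatest z hz).2 hsup)

theorem sigma_le_iff_le_gamma (hx : x ∉ F) (hz : z ∉ F) : σ x ≤ z ↔ x ≤ γ z :=
  (hF.sigma_le_iff hx).trans (hF.le_gamma_iff hz).symm

theorem sigma_notMem (hx : x ∉ F) : σ x ∉ F :=
  fun h => hx (hF.mem_of_ld_mem h (hF.isLeast x hx).1.2)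

theorem gamma_notMem (hx : x ∉ F) : γ x ∉ F :=
  fun h => hx (hF.mem_of_ld_mem h (hF.isGreatest x hx).1.2)

theorem sigma_eq_of_theta (hx : x ∉ F) (hy : y ∉ F) (h : theta F x y) : σ x = σ y :=
  ((hF.isLeast x hx).2 (hF.theta_trans h (hF.isLeast y hy).1)).antisymm
    ((hF.isLeast y hy).2 (hF.theta_trans h.symm (hF.isLeast x hx).1))

theorem sigma_sigma (hx : x ∉ F) : σ (σ x) = σ x :=
  (hF.sigma_eq_of_theta hx (hF.sigma_notMem hx) (hF.isLeast x hx).1).symm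

theorem sigma_mul_mem (hx : x ∉ F) (hf : f ∈ F) : σ (x * f) = σ x :=
  (hF.sigma_eq_of_theta hx (hF.mul_notMem_left hx f) (hF.theta_mul_mem x hf)).symm

theorem sigma_mem_mul (hx : x ∉ F) (hf : f ∈ F) : σ (f * x) = σ x :=
  (hF.sigma_eq_of_theta hx (hF.mul_notMem_right hx f) (hF.theta_mem_mul x hf)).symm

theorem mul_sigma_of_mem (hx : x ∉ F) (hf : f ∈ F) : f * σ x = σ x :=
  (mul_le_right f _).antisymm <|
    (hF.isLeast x hx).2 (hF.theta_trans (hF.isLeast x hx).1 (hF.theta_mem_mul _ hf))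

theorem sigma_mul_of_mem (hx : x ∉ F) (hf : f ∈ F) : σ x * f = σ x :=
  (mul_le_left _ f).antisymm <|
    (hF.isLeast x hx).2 (hF.theta_trans (hF.isLeast x hx).1 (hF.theta_mul_mem _ hf))

theorem sigma_eq_of_theta_sigma (hx : x ∉ F) (hy : y ∉ F) (h : theta F x (σ y)) : σ x = σ y := by
  rw [hF.sigma_eq_of_theta hx (hF.sigma_notMem hy) h, hF.sigma_sigma hy]

theorem mul_sigma (hy : y ∉ F) (hx : x ∉ F) : y * σ x = σ (y * x) := by
  obtain ⟨u, hu, h⟩ := (hF.absorbing y hy x hx).1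
  rw [h]
  refine (hF.sigma_eq_of_theta_sigma (hF.mul_notMem_right hx y) hu ?_).symm
  rw [← h]
  exact hF.theta_mul_left (hF.isLeast x hx).1 y

theorem sigma_mul (hx : x ∉ F) (hy : y ∉ F) : σ x * y = σ (x * y) := by
  obtain ⟨u, hu, h⟩ := (hF.absorbing y hy x hx).2
  rw [h]
  refine (hF.sigma_eq_of_theta_sigma (hF.mul_notMem_left hx y) hu ?_).symm
  rw [← h]
  exact hF.theta_mul_right (hF.isLeast x hx).1 y

end IsCompatible

/-- A lattice-ordered semigroup `X` with left and right actions of an integral residuated lattice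
`C` such that all products that involve `X` are residuated in the ordinal sum of `X` below `C`. The
associativity laws other than `op_smul_mul` are left to `MulAction`, `IsScalarTower` and
`SMulCommClass`. For `x z : X` and `c : C`, the elements `ld x z`, `rd z x`, `scalarLd c z`,
`scalarRd z c` stand for `x \ z`, `z / x`, `c \ z`, `z / c`; the first two may lie in `C`. -/
class ResiduatedBimodule (X : Type u) (C : Type v) [Lattice X] [Semigroup X] [IRL C]
    [SMul C X] [SMul Cᵐᵒᵖ X] where
  op_smul_mul : ∀ (x y : X) (c : C), (x <• c) * y = x * (c • y)
  ld : X → X → X ⊕ₗ C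
  rd : X → X → X ⊕ₗ C
  scalarLd : C → X → X
  scalarRd : X → C → X
  mul_le_iff_ld : ∀ x y z : X, x * y ≤ z ↔ inlₗ y ≤ ld x z
  mul_le_iff_rd : ∀ x y z : X, x * y ≤ z ↔ inlₗ x ≤ rd z y
  op_smul_le_iff_ld : ∀ (x z : X) (c : C), x <• c ≤ z ↔ inrₗ c ≤ ld x z
  smul_le_iff_rd : ∀ (c : C) (x z : X), c • x ≤ z ↔ inrₗ c ≤ rd z x
  smul_le_iff_scalarLd : ∀ (c : C) (x z : X), c • x ≤ z ↔ x ≤ scalarLd c z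
  op_smul_le_iff_scalarRd : ∀ (x z : X) (c : C), x <• c ≤ z ↔ x ≤ scalarRd z c

namespace ResiduatedBimodule

variable {X : Type u} {C : Type v} [Lattice X] [Semigroup X] [IRL C] [MulAction C X]
  [MulAction Cᵐᵒᵖ X] [IsScalarTower C X X] [SMulCommClass Cᵐᵒᵖ X X] [SMulCommClass C Cᵐᵒᵖ X]
  [ResiduatedBimodule X C]

instance irl : IRL (X ⊕ₗ C) where
  mul
    | inlₗ x, inlₗ y => inlₗ (x * y)
    | inlₗ x, inrₗ c => inlₗ (x <• c)
    | inrₗ c, inlₗ x => inlₗ (c • x)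
    | inrₗ c, inrₗ d => inrₗ (c * d)
  one := inrₗ 1
  mul_assoc
    | inlₗ x, inlₗ y, inlₗ z => congrArg inlₗ (mul_assoc x y z)
    | inlₗ x, inlₗ y, inrₗ c => congrArg inlₗ (mul_smul_comm (MulOpposite.op c) x y).symm
    | inlₗ x, inrₗ c, inlₗ y => congrArg inlₗ (op_smul_mul x y c)
    | inlₗ x, inrₗ c, inrₗ d => congrArg inlₗ (op_smul_op_smul x c d)
    | inrₗ c, inlₗ x, inlₗ y => congrArg inlₗ (smul_mul_assoc c x y)
    | inrₗ c, inlₗ x, inrₗ d => congrArg inlₗ (smul_comm c (MulOpposite.op d) x).symm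
    | inrₗ c, inrₗ d, inlₗ x => congrArg inlₗ (mul_smul c d x)
    | inrₗ c, inrₗ d, inrₗ d' => congrArg inrₗ (mul_assoc c d d')
  one_mul
    | inlₗ x => congrArg inlₗ (one_smul C x)
    | inrₗ c => congrArg inrₗ (one_mul c)
  mul_one
    | inlₗ x => congrArg inlₗ (one_smul Cᵐᵒᵖ x)
    | inrₗ c => congrArg inrₗ (mul_one c)
  ld
    | inlₗ x, inlₗ z => ld x z
    | inlₗ _, inrₗ _ => inrₗ 1
    | inrₗ c, inlₗ z => inlₗ (scalarLd c z)
    | inrₗ c, inrₗ d => inrₗ (IRL.ld c d)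
  rd
    | inlₗ z, inlₗ x => rd z x
    | inlₗ z, inrₗ c => inlₗ (scalarRd z c)
    | inrₗ _, inlₗ _ => inrₗ 1
    | inrₗ d, inrₗ c => inrₗ (IRL.rd d c)
  mul_le_iff_ld
    | inlₗ x, inlₗ y, inlₗ z => Lex.inl_le_inl_iff.trans (mul_le_iff_ld x y z)
    | inlₗ x, inrₗ c, inlₗ z => Lex.inl_le_inl_iff.trans (op_smul_le_iff_ld x z c)
    | inrₗ c, inlₗ x, inlₗ z =>
      Lex.inl_le_inl_iff.trans ((smul_le_iff_scalarLd c x z).trans Lex.inl_le_inl_iff.symm)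
    | inrₗ _, inrₗ _, inlₗ _ => iff_of_false Lex.not_inr_le_inl Lex.not_inr_le_inl
    | inlₗ _, inlₗ _, inrₗ _ => iff_of_true (Lex.inl_le_inr _ _) (Lex.inl_le_inr _ _)
    | inlₗ _, inrₗ c, inrₗ _ =>
      iff_of_true (Lex.inl_le_inr _ _) (Lex.inr_le_inr_iff.2 (le_one c))
    | inrₗ _, inlₗ _, inrₗ _ => iff_of_true (Lex.inl_le_inr _ _) (Lex.inl_le_inr _ _)
    | inrₗ c, inrₗ d, inrₗ d' =>
      Lex.inr_le_inr_iff.trans ((IRL.mul_le_iff_ld c d d').trans Lex.inr_le_inr_iff.symm)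
  mul_le_iff_rd
    | inlₗ x, inlₗ y, inlₗ z => Lex.inl_le_inl_iff.trans (mul_le_iff_rd x y z)
    | inlₗ x, inrₗ c, inlₗ z =>
      Lex.inl_le_inl_iff.trans ((op_smul_le_iff_scalarRd x z c).trans Lex.inl_le_inl_iff.symm)
    | inrₗ c, inlₗ x, inlₗ z => Lex.inl_le_inl_iff.trans (smul_le_iff_rd c x z)
    | inrₗ _, inrₗ _, inlₗ _ => iff_of_false Lex.not_inr_le_inl Lex.not_inr_le_inl
    | inlₗ _, inlₗ _, inrₗ _ => iff_of_true (Lex.inl_le_inr _ _) (Lex.inl_le_inr _ _)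
    | inlₗ _, inrₗ _, inrₗ _ => iff_of_true (Lex.inl_le_inr _ _) (Lex.inl_le_inr _ _)
    | inrₗ c, inlₗ _, inrₗ _ =>
      iff_of_true (Lex.inl_le_inr _ _) (Lex.inr_le_inr_iff.2 (le_one c))
    | inrₗ c, inrₗ d, inrₗ d' =>
      Lex.inr_le_inr_iff.trans ((IRL.mul_le_iff_rd c d d').trans Lex.inr_le_inr_iff.symm)
  le_one
    | inlₗ _ => Lex.inl_le_inr _ _
    | inrₗ c => Lex.inr_le_inr_iff.2 (le_one c)

theorem isEmbedding_inr : IsEmbedding (inrₗ : C → X ⊕ₗ C) where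
  injective := toLex.injective.comp inr_injective
  map_sup _ _ := rfl
  map_inf _ _ := rfl
  map_mul _ _ := rfl
  map_ld _ _ := rfl
  map_rd _ _ := rfl
  map_one := rfl

end ResiduatedBimodule

/-- The data of a gluing over a filter: a compatible congruence filter `F` of `B` whose complement
is closed under joins, a subset `G` of `C` lying strictly above its complement, and a map `e` that
restricts to an isomorphism of `F` onto `G`. The values of `e` outside `F` are unconstrained. -/
structure GluingDatum (B : Type u) (C : Type v) [IRL B] [IRL C] where
  F : Set B
  G : Set C
  σ : B → B
  γ : B → B
  e : B → C
  compatible : IsCompatible F σ γ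
  sup_notMem : ∀ x ∉ F, ∀ y ∉ F, x ⊔ y ∉ F
  lt_of_notMem : ∀ c ∉ G, ∀ g ∈ G, c < g
  bijOn : Set.BijOn e F G
  map_one : e 1 = 1
  map_mul : ∀ x ∈ F, ∀ y ∈ F, e (x * y) = e x * e y
  map_ld : ∀ x ∈ F, ∀ y ∈ F, e (ld x y) = ld (e x) (e y)
  map_rd : ∀ x ∈ F, ∀ y ∈ F, e (rd x y) = rd (e x) (e y)
  map_sup : ∀ x ∈ F, ∀ y ∈ F, e (x ⊔ y) = e x ⊔ e y
  map_inf : ∀ x ∈ F, ∀ y ∈ F, e (x ⊓ y) = e x ⊓ e y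

namespace GluingDatum

variable {B : Type u} {C : Type v} [IRL B] [IRL C] (S : GluingDatum B C) {x y b : B} {c d : C}

theorem map_mem (hx : x ∈ S.F) : S.e x ∈ S.G := S.bijOn.mapsTo hx

theorem map_le_map_iff (hx : x ∈ S.F) (hy : y ∈ S.F) : S.e x ≤ S.e y ↔ x ≤ y := by
  rw [← sup_eq_right, ← sup_eq_right, ← S.map_sup x hx y hy]
  exact S.bijOn.injOn.eq_iff (S.compatible.upward x hx _ le_sup_left) hy

theorem one_mem : (1 : C) ∈ S.G := S.map_one ▸ S.map_mem S.compatible.one_mem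

theorem mem_of_le (hc : c ∈ S.G) (h : c ≤ d) : d ∈ S.G :=
  by_contra fun hd => (S.lt_of_notMem d hd c hc).not_ge h

/-- The inverse of `e` on `G`, with arbitrary values outside `G`. -/
noncomputable def inv (c : C) : B := invFunOn S.e S.F c

theorem inv_mem (hc : c ∈ S.G) : S.inv c ∈ S.F := S.bijOn.surjOn.mapsTo_invFunOn hc

theorem map_inv (hc : c ∈ S.G) : S.e (S.inv c) = c := S.bijOn.invOn_invFunOn.2 hc

theorem inv_map (hx : x ∈ S.F) : S.inv (S.e x) = x := S.bijOn.invOn_invFunOn.1 hx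

theorem inv_one : S.inv 1 = 1 := by
  rw [← S.map_one, S.inv_map S.compatible.one_mem]

theorem mul_mem_iff : c * d ∈ S.G ↔ c ∈ S.G ∧ d ∈ S.G := by
  refine ⟨fun h => ⟨S.mem_of_le h (mul_le_left c d), S.mem_of_le h (mul_le_right c d)⟩, ?_⟩
  rintro ⟨hc, hd⟩
  rw [← S.map_inv hc, ← S.map_inv hd, ← S.map_mul _ (S.inv_mem hc) _ (S.inv_mem hd)]
  exact S.map_mem (S.compatible.mul_mem _ (S.inv_mem hc) _ (S.inv_mem hd))

theorem inv_mul (hc : c ∈ S.G) (hd : d ∈ S.G) : S.inv (c * d) = S.inv c * S.inv d := by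
  have hmul := S.map_mul _ (S.inv_mem hc) _ (S.inv_mem hd)
  rw [S.map_inv hc, S.map_inv hd] at hmul
  rw [← hmul, S.inv_map (S.compatible.mul_mem _ (S.inv_mem hc) _ (S.inv_mem hd))]

theorem inv_le_iff (hc : c ∈ S.G) (hx : x ∈ S.F) : S.inv c ≤ x ↔ c ≤ S.e x := by
  rw [← S.map_le_map_iff (S.inv_mem hc) hx, S.map_inv hc]

/-- The complement of `F`, the part of `B` that is glued below `C`. -/
abbrev Lower : Type u := {b : B // b ∉ S.F}

namespace Lower

variable {S} (u v : S.Lower)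

instance : Lattice S.Lower :=
  Subtype.lattice (fun x y hx hy => S.sup_notMem x hx y hy)
    fun _ _ hx _ h => hx (S.compatible.upward _ h _ inf_le_left)

instance : Semigroup S.Lower where
  mul u v := ⟨u.1 * v.1, S.compatible.mul_notMem_left u.2 v.1⟩
  mul_assoc u v w := Subtype.ext (mul_assoc u.1 v.1 w.1)

open Classical in
noncomputable instance : SMul C S.Lower where
  smul c u := ⟨if c ∈ S.G then S.inv c * u.1 else S.σ u.1, by
    split_ifs
    exacts [S.compatible.mul_notMem_right u.2 _, S.compatible.sigma_notMem u.2]⟩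

open Classical in
noncomputable instance : SMul Cᵐᵒᵖ S.Lower where
  smul c u := ⟨if c.unop ∈ S.G then u.1 * S.inv c.unop else S.σ u.1, by
    split_ifs
    exacts [S.compatible.mul_notMem_left u.2 _, S.compatible.sigma_notMem u.2]⟩

theorem val_mul : (u * v).1 = u.1 * v.1 := rfl

theorem val_smul_of_mem (hc : c ∈ S.G) : (c • u).1 = S.inv c * u.1 := if_pos hc

theorem val_smul_of_notMem (hc : c ∉ S.G) : (c • u).1 = S.σ u.1 := if_neg hc

theorem val_op_smul_of_mem (hc : c ∈ S.G) : (u <• c).1 = u.1 * S.inv c := if_pos hc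

theorem val_op_smul_of_notMem (hc : c ∉ S.G) : (u <• c).1 = S.σ u.1 := if_neg hc

theorem mul_smul_eq_smul_smul (c d : C) : (c * d) • u = c • d • u := by
  apply Subtype.ext
  by_cases hc : c ∈ S.G <;> by_cases hd : d ∈ S.G
  · simp only [val_smul_of_mem, S.mul_mem_iff, hc, hd, and_self, S.inv_mul, mul_assoc]
  · simp only [val_smul_of_mem, val_smul_of_notMem, S.mul_mem_iff, hc, hd, and_false,
      not_false_eq_true, S.compatible.mul_sigma_of_mem u.2 (S.inv_mem hc)]
  · simp only [val_smul_of_mem, val_smul_of_notMem, S.mul_mem_iff, hc, hd, false_and,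
      not_false_eq_true, S.compatible.sigma_mem_mul u.2 (S.inv_mem hd)]
  · simp only [val_smul_of_notMem, S.mul_mem_iff, hc, hd, and_self, not_false_eq_true,
      S.compatible.sigma_sigma u.2]

theorem op_smul_mul_eq_op_smul_op_smul (c d : C) : u <• (c * d) = u <• c <• d := by
  apply Subtype.ext
  by_cases hc : c ∈ S.G <;> by_cases hd : d ∈ S.G
  · simp only [val_op_smul_of_mem, S.mul_mem_iff, hc, hd, and_self, S.inv_mul, mul_assoc]
  · simp only [val_op_smul_of_mem, val_op_smul_of_notMem, S.mul_mem_iff, hc, hd, and_false,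
      not_false_eq_true, S.compatible.sigma_mul_mem u.2 (S.inv_mem hc)]
  · simp only [val_op_smul_of_mem, val_op_smul_of_notMem, S.mul_mem_iff, hc, hd, false_and,
      not_false_eq_true, S.compatible.sigma_mul_of_mem u.2 (S.inv_mem hd)]
  · simp only [val_op_smul_of_notMem, S.mul_mem_iff, hc, hd, and_self, not_false_eq_true,
      S.compatible.sigma_sigma u.2]

noncomputable instance : MulAction C S.Lower where
  one_smul u := Subtype.ext <| by rw [val_smul_of_mem u S.one_mem, S.inv_one, one_mul]
  mul_smul c d u := mul_smul_eq_smul_smul u c d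

noncomputable instance : MulAction Cᵐᵒᵖ S.Lower where
  one_smul u := Subtype.ext <| by
    rw [← MulOpposite.op_one, val_op_smul_of_mem u S.one_mem, S.inv_one, mul_one]
  mul_smul c d u := op_smul_mul_eq_op_smul_op_smul u d.unop c.unop

instance : IsScalarTower C S.Lower S.Lower where
  smul_assoc c u v := Subtype.ext <| by
    by_cases hc : c ∈ S.G
    · simp only [smul_eq_mul, val_mul, val_smul_of_mem _ hc, mul_assoc]
    · simp only [smul_eq_mul, val_mul, val_smul_of_notMem _ hc, S.compatible.sigma_mul u.2 v.2]

instance : SMulCommClass Cᵐᵒᵖ S.Lower S.Lower where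
  smul_comm c u v := Subtype.ext <| by
    change ((u * v) <• c.unop).1 = (u * v <• c.unop).1
    by_cases hc : c.unop ∈ S.G
    · simp only [val_mul, val_op_smul_of_mem _ hc, mul_assoc]
    · simp only [val_mul, val_op_smul_of_notMem _ hc, S.compatible.mul_sigma u.2 v.2]

instance : SMulCommClass C Cᵐᵒᵖ S.Lower where
  smul_comm c d u := Subtype.ext <| by
    change (c • u <• d.unop).1 = ((c • u) <• d.unop).1
    by_cases hc : c ∈ S.G <;> by_cases hd : d.unop ∈ S.G
    · simp only [val_smul_of_mem _ hc, val_op_smul_of_mem _ hd, mul_assoc]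
    · simp only [val_smul_of_mem _ hc, val_op_smul_of_notMem _ hd,
        S.compatible.mul_sigma_of_mem u.2 (S.inv_mem hc),
        S.compatible.sigma_mem_mul u.2 (S.inv_mem hc)]
    · simp only [val_smul_of_notMem _ hc, val_op_smul_of_mem _ hd,
        S.compatible.sigma_mul_mem u.2 (S.inv_mem hd),
        S.compatible.sigma_mul_of_mem u.2 (S.inv_mem hd)]
    · simp only [val_smul_of_notMem _ hc, val_op_smul_of_notMem _ hd]

theorem op_smul_mul_eq_mul_smul (c : C) : (u <• c) * v = u * c • v := by
  apply Subtype.ext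
  by_cases hc : c ∈ S.G
  · simp only [val_mul, val_smul_of_mem _ hc, val_op_smul_of_mem _ hc, mul_assoc]
  · simp only [val_mul, val_smul_of_notMem _ hc, val_op_smul_of_notMem _ hc,
      S.compatible.mul_sigma u.2 v.2, S.compatible.sigma_mul u.2 v.2]

open Classical in
/-- The residual `c \ u` of an element of `C` and an element of the complement of `F`. -/
noncomputable def scalarLd (c : C) (u : S.Lower) : S.Lower :=
  if hc : c ∈ S.G then ⟨ld (S.inv c) u.1, S.compatible.ld_notMem (S.inv_mem hc) u.2⟩
  else ⟨S.γ u.1, S.compatible.gamma_notMem u.2⟩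

open Classical in
/-- The residual `u / c` of an element of `C` and an element of the complement of `F`. -/
noncomputable def scalarRd (u : S.Lower) (c : C) : S.Lower :=
  if hc : c ∈ S.G then ⟨rd u.1 (S.inv c), S.compatible.rd_notMem (S.inv_mem hc) u.2⟩
  else ⟨S.γ u.1, S.compatible.gamma_notMem u.2⟩

theorem scalarLd_of_mem (hc : c ∈ S.G) : (scalarLd c u).1 = ld (S.inv c) u.1 := by
  rw [scalarLd, dif_pos hc]

theorem scalarLd_of_notMem (hc : c ∉ S.G) : (scalarLd c u).1 = S.γ u.1 := by
  rw [scalarLd, dif_neg hc]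

theorem scalarRd_of_mem (hc : c ∈ S.G) : (scalarRd u c).1 = rd u.1 (S.inv c) := by
  rw [scalarRd, dif_pos hc]

theorem scalarRd_of_notMem (hc : c ∉ S.G) : (scalarRd u c).1 = S.γ u.1 := by
  rw [scalarRd, dif_neg hc]

theorem smul_le_iff_le_scalarLd (c : C) : c • u ≤ v ↔ u ≤ scalarLd c v := by
  change (c • u).1 ≤ v.1 ↔ u.1 ≤ (scalarLd c v).1
  by_cases hc : c ∈ S.G
  · rw [val_smul_of_mem u hc, scalarLd_of_mem v hc, mul_le_iff_ld]
  · rw [val_smul_of_notMem u hc, scalarLd_of_notMem v hc,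
      S.compatible.sigma_le_iff_le_gamma u.2 v.2]

theorem op_smul_le_iff_le_scalarRd (c : C) : u <• c ≤ v ↔ u ≤ scalarRd v c := by
  change (u <• c).1 ≤ v.1 ↔ u.1 ≤ (scalarRd v c).1
  by_cases hc : c ∈ S.G
  · rw [val_op_smul_of_mem u hc, scalarRd_of_mem v hc, mul_le_iff_rd]
  · rw [val_op_smul_of_notMem u hc, scalarRd_of_notMem v hc,
      S.compatible.sigma_le_iff_le_gamma u.2 v.2]

end Lower

open Classical in
/-- The embedding of `B` into the gluing: `e` on `F`, the inclusion outside `F`. -/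
noncomputable def embed (b : B) : S.Lower ⊕ₗ C :=
  if hb : b ∈ S.F then inrₗ (S.e b) else inlₗ ⟨b, hb⟩

theorem embed_of_mem (hb : b ∈ S.F) : S.embed b = inrₗ (S.e b) := dif_pos hb

theorem embed_of_notMem (hb : b ∉ S.F) : S.embed b = inlₗ ⟨b, hb⟩ := dif_neg hb

theorem inl_le_embed_iff (u : S.Lower) : inlₗ u ≤ S.embed b ↔ u.1 ≤ b := by
  by_cases hb : b ∈ S.F
  · rw [S.embed_of_mem hb]
    exact iff_of_true (Lex.inl_le_inr _ _) (S.compatible.lt_of_notMem b hb _ u.2).le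
  · rw [S.embed_of_notMem hb]
    exact Lex.inl_le_inl_iff

theorem inr_le_embed_iff : inrₗ c ≤ S.embed b ↔ b ∈ S.F ∧ c ≤ S.e b := by
  by_cases hb : b ∈ S.F
  · rw [S.embed_of_mem hb, and_iff_right hb]
    exact Lex.inr_le_inr_iff
  · rw [S.embed_of_notMem hb]
    exact iff_of_false Lex.not_inr_le_inl fun h => hb h.1

theorem inr_le_embed_iff_of_mem (hc : c ∈ S.G) : inrₗ c ≤ S.embed b ↔ S.inv c ≤ b := by
  rw [inr_le_embed_iff]
  refine ⟨fun h => (S.inv_le_iff hc h.1).2 h.2, fun h => ?_⟩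
  have hb : b ∈ S.F := S.compatible.upward _ (S.inv_mem hc) b h
  exact ⟨hb, (S.inv_le_iff hc hb).1 h⟩

theorem inr_le_embed_iff_of_notMem (hc : c ∉ S.G) : inrₗ c ≤ S.embed b ↔ b ∈ S.F := by
  rw [inr_le_embed_iff]
  exact and_iff_left_of_imp fun hb => (S.lt_of_notMem c hc _ (S.map_mem hb)).le

theorem op_smul_le_iff_embed_ld (u v : S.Lower) (c : C) :
    u <• c ≤ v ↔ inrₗ c ≤ S.embed (ld u.1 v.1) := by
  change (u <• c).1 ≤ v.1 ↔ _
  by_cases hc : c ∈ S.G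
  · rw [Lower.val_op_smul_of_mem u hc, S.inr_le_embed_iff_of_mem hc, mul_le_iff_ld]
  · rw [Lower.val_op_smul_of_notMem u hc, S.inr_le_embed_iff_of_notMem hc,
      S.compatible.sigma_le_iff u.2]

theorem smul_le_iff_embed_rd (u v : S.Lower) (c : C) :
    c • u ≤ v ↔ inrₗ c ≤ S.embed (rd v.1 u.1) := by
  change (c • u).1 ≤ v.1 ↔ _
  by_cases hc : c ∈ S.G
  · rw [Lower.val_smul_of_mem u hc, S.inr_le_embed_iff_of_mem hc, mul_le_iff_rd]
  · rw [Lower.val_smul_of_notMem u hc, S.inr_le_embed_iff_of_notMem hc,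
      S.compatible.sigma_le_iff u.2, S.compatible.ld_mem_iff_rd_mem]

noncomputable instance : ResiduatedBimodule S.Lower C where
  op_smul_mul := Lower.op_smul_mul_eq_mul_smul
  ld u v := S.embed (ld u.1 v.1)
  rd v u := S.embed (rd v.1 u.1)
  scalarLd := Lower.scalarLd
  scalarRd := Lower.scalarRd
  mul_le_iff_ld u v w := (mul_le_iff_ld u.1 v.1 w.1).trans (S.inl_le_embed_iff v).symm
  mul_le_iff_rd u v w := (mul_le_iff_rd u.1 v.1 w.1).trans (S.inl_le_embed_iff u).symm
  op_smul_le_iff_ld := S.op_smul_le_iff_embed_ld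
  smul_le_iff_rd c u v := S.smul_le_iff_embed_rd u v c
  smul_le_iff_scalarLd c u v := Lower.smul_le_iff_le_scalarLd u v c
  op_smul_le_iff_scalarRd := Lower.op_smul_le_iff_le_scalarRd

theorem embed_injective : Injective S.embed := by
  intro x y h
  by_cases hx : x ∈ S.F <;> by_cases hy : y ∈ S.F
  · rw [S.embed_of_mem hx, S.embed_of_mem hy] at h
    exact S.bijOn.injOn hx hy (inr.inj h)
  · rw [S.embed_of_mem hx, S.embed_of_notMem hy] at h
    exact (inr_ne_inl h).elim
  · rw [S.embed_of_notMem hx, S.embed_of_mem hy] at h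
    exact (inl_ne_inr h).elim
  · rw [S.embed_of_notMem hx, S.embed_of_notMem hy] at h
    exact congrArg Subtype.val (inl.inj h)

theorem embed_sup (x y : B) : S.embed (x ⊔ y) = S.embed x ⊔ S.embed y := by
  by_cases hx : x ∈ S.F <;> by_cases hy : y ∈ S.F
  · rw [S.embed_of_mem hx, S.embed_of_mem hy,
      S.embed_of_mem (S.compatible.upward x hx _ le_sup_left), S.map_sup x hx y hy]
    rfl
  · rw [sup_eq_left.2 (S.compatible.lt_of_notMem x hx y hy).le, S.embed_of_mem hx,
      S.embed_of_notMem hy]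
    rfl
  · rw [sup_eq_right.2 (S.compatible.lt_of_notMem y hy x hx).le, S.embed_of_notMem hx,
      S.embed_of_mem hy]
    rfl
  · rw [S.embed_of_notMem hx, S.embed_of_notMem hy, S.embed_of_notMem (S.sup_notMem x hx y hy)]
    rfl

theorem embed_inf (x y : B) : S.embed (x ⊓ y) = S.embed x ⊓ S.embed y := by
  by_cases hx : x ∈ S.F <;> by_cases hy : y ∈ S.F
  · rw [S.embed_of_mem hx, S.embed_of_mem hy, S.embed_of_mem (S.compatible.inf_mem hx hy),
      S.map_inf x hx y hy]
    rfl
  · rw [inf_eq_right.2 (S.compatible.lt_of_notMem x hx y hy).le, S.embed_of_mem hx,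
      S.embed_of_notMem hy]
    rfl
  · rw [inf_eq_left.2 (S.compatible.lt_of_notMem y hy x hx).le, S.embed_of_notMem hx,
      S.embed_of_mem hy]
    rfl
  · rw [S.embed_of_notMem hx, S.embed_of_notMem hy,
      S.embed_of_notMem fun h => hx (S.compatible.upward _ h _ inf_le_left)]
    rfl

theorem embed_mul (x y : B) : S.embed (x * y) = S.embed x * S.embed y := by
  by_cases hx : x ∈ S.F <;> by_cases hy : y ∈ S.F
  · rw [S.embed_of_mem hx, S.embed_of_mem hy, S.embed_of_mem (S.compatible.mul_mem x hx y hy),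
      S.map_mul x hx y hy]
    rfl
  · rw [S.embed_of_mem hx, S.embed_of_notMem hy,
      S.embed_of_notMem (S.compatible.mul_notMem_right hy x)]
    refine congrArg inlₗ (Subtype.ext ?_)
    rw [Lower.val_smul_of_mem _ (S.map_mem hx), S.inv_map hx]
  · rw [S.embed_of_notMem hx, S.embed_of_mem hy,
      S.embed_of_notMem (S.compatible.mul_notMem_left hx y)]
    refine congrArg inlₗ (Subtype.ext ?_)
    rw [Lower.val_op_smul_of_mem _ (S.map_mem hy), S.inv_map hy]
  · rw [S.embed_of_notMem hx, S.embed_of_notMem hy,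
      S.embed_of_notMem (S.compatible.mul_notMem_left hx y)]
    rfl

theorem embed_one : S.embed 1 = 1 := by
  rw [S.embed_of_mem S.compatible.one_mem, S.map_one]
  rfl

theorem embed_ld (x y : B) : S.embed (ld x y) = ld (S.embed x) (S.embed y) := by
  by_cases hx : x ∈ S.F <;> by_cases hy : y ∈ S.F
  · rw [S.embed_of_mem hx, S.embed_of_mem hy,
      S.embed_of_mem (S.compatible.upward y hy _ (le_ld x y)), S.map_ld x hx y hy]
    rfl
  · rw [S.embed_of_mem hx, S.embed_of_notMem hy,
      S.embed_of_notMem (S.compatible.ld_notMem hx hy)]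
    refine congrArg inlₗ (Subtype.ext ?_)
    change ld x y = (Lower.scalarLd (S.e x) ⟨y, hy⟩).1
    rw [Lower.scalarLd_of_mem _ (S.map_mem hx), S.inv_map hx]
  · rw [ld_eq_one (S.compatible.lt_of_notMem y hy x hx).le, S.embed_one, S.embed_of_notMem hx,
      S.embed_of_mem hy]
    rfl
  · rw [S.embed_of_notMem hx, S.embed_of_notMem hy]
    rfl

theorem embed_rd (x y : B) : S.embed (rd x y) = rd (S.embed x) (S.embed y) := by
  by_cases hx : x ∈ S.F <;> by_cases hy : y ∈ S.F
  · rw [S.embed_of_mem hx, S.embed_of_mem hy,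
      S.embed_of_mem (S.compatible.upward x hx _ (le_rd y x)), S.map_rd x hx y hy]
    rfl
  · rw [rd_eq_one (S.compatible.lt_of_notMem x hx y hy).le, S.embed_one, S.embed_of_mem hx,
      S.embed_of_notMem hy]
    rfl
  · rw [S.embed_of_notMem hx, S.embed_of_mem hy,
      S.embed_of_notMem (S.compatible.rd_notMem hy hx)]
    refine congrArg inlₗ (Subtype.ext ?_)
    change rd x y = (Lower.scalarRd ⟨x, hx⟩ (S.e y)).1
    rw [Lower.scalarRd_of_mem _ (S.map_mem hy), S.inv_map hy]
  · rw [S.embed_of_notMem hx, S.embed_of_notMem hy]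
    rfl

theorem isEmbedding_embed : IsEmbedding S.embed where
  injective := S.embed_injective
  map_sup := S.embed_sup
  map_inf := S.embed_inf
  map_mul := S.embed_mul
  map_ld := S.embed_ld
  map_rd := S.embed_rd
  map_one := S.embed_one

theorem range_embed_union_range_inr : Set.range S.embed ∪ Set.range inrₗ = Set.univ := by
  refine Set.eq_univ_of_forall ?_
  rintro (u | c)
  · exact Or.inl ⟨u.1, S.embed_of_notMem u.2⟩
  · exact Or.inr ⟨c, rfl⟩

theorem range_embed_inter_range_inr : Set.range S.embed ∩ Set.range inrₗ = S.embed '' S.F := by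
  apply Set.Subset.antisymm
  · rintro _ ⟨⟨b, rfl⟩, c, hc⟩
    exact ⟨b, (S.inr_le_embed_iff.1 hc.le).1, rfl⟩
  · rintro _ ⟨b, hb, rfl⟩
    exact ⟨⟨b, rfl⟩, S.e b, (S.embed_of_mem hb).symm⟩

theorem embed_lt_inr (hb : b ∉ S.F) (c : C) : S.embed b < inrₗ c := by
  rw [S.embed_of_notMem hb]
  exact Lex.inl_lt_inr _ _

end GluingDatum

end IRL

theorem gluing_over_filter_exists_general {B : Type u} {C : Type v} [IRL B] [IRL C]
    (S : IRL.GluingDatum B C) :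
    ∃ (D : Type (max u v)) (_ : IRL D) (h : B → D) (k : C → D),
      IRL.IsEmbedding h ∧ IRL.IsEmbedding k ∧
      (∀ x ∈ S.F, h x = k (S.e x)) ∧
      Set.range h ∪ Set.range k = Set.univ ∧
      Set.range h ∩ Set.range k = h '' S.F ∧
      (∀ b ∉ S.F, ∀ c ∉ S.G, h b < k c) ∧
      (∀ c ∉ S.G, ∀ g ∈ S.G, k c < k g) :=
  ⟨S.Lower ⊕ₗ C, inferInstance, S.embed, inrₗ, S.isEmbedding_embed,
    IRL.ResiduatedBimodule.isEmbedding_inr, fun _ => S.embed_of_mem,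
    S.range_embed_union_range_inr, S.range_embed_inter_range_inr,
    fun _ hb c _ => S.embed_lt_inr hb c,
    fun c hc g hg => Lex.inr_lt_inr_iff.2 (S.lt_of_notMem c hc g hg)⟩

/-- existence of the gluing over a filter (strong amalgamation over a
common filter). Given an IRL `B` with a compatible congruence filter `F` such that
`B ∖ F` is closed under joins, an IRL `C` with a congruence filter `G` lying strictly
above `C ∖ G`, and an isomorphism `e` from `F` onto `G`, there exist an IRL `D` and
embeddings `h : B → D`, `k : C → D` agreeing on `F` (via `e`), whose images cover `D`
and intersect exactly in `h(F)`, and with `h(b) < k(c) < k(g)` for `b ∈ B∖F`,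
`c ∈ C∖G`, `g ∈ G`. -/
theorem gluing_over_filter_exists (B : Type) [IRL B] (C : Type) [IRL C]
    (F : Set B) (hF : IRL.IsCongFilter F)
    (σ γ : B → B)
    (hstrict : ∀ f ∈ F, ∀ b : B, b ∉ F → b < f)
    (hσ : ∀ x : B, x ∉ F → IsLeast (IRL.cls F x) (σ x))
    (hγ : ∀ x : B, x ∉ F → IsGreatest (IRL.cls F x) (γ x))
    (habs : ∀ b : B, b ∉ F → ∀ x : B, x ∉ F →
      (∃ u : B, u ∉ F ∧ b * σ x = σ u) ∧ (∃ v : B, v ∉ F ∧ σ x * b = σ v))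
    (hjoin : ∀ x : B, x ∉ F → ∀ y : B, y ∉ F → x ⊔ y ∉ F)
    (G : Set C) (hG : IRL.IsCongFilter G)
    (hCG : ∀ c : C, c ∉ G → ∀ g ∈ G, c < g)
    (e : B → C)
    (einj : ∀ x ∈ F, ∀ y ∈ F, e x = e y → x = y)
    (eimg : e '' F = G)
    (eone : e 1 = 1)
    (emul : ∀ x ∈ F, ∀ y ∈ F, e (x * y) = e x * e y)
    (eld : ∀ x ∈ F, ∀ y ∈ F, e (IRL.ld x y) = IRL.ld (e x) (e y))
    (erd : ∀ x ∈ F, ∀ y ∈ F, e (IRL.rd x y) = IRL.rd (e x) (e y))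
    (esup : ∀ x ∈ F, ∀ y ∈ F, e (x ⊔ y) = e x ⊔ e y)
    (einf : ∀ x ∈ F, ∀ y ∈ F, e (x ⊓ y) = e x ⊓ e y) :
    ∃ (D : Type) (_ : IRL D) (h : B → D) (k : C → D),
      Function.Injective h ∧ Function.Injective k ∧
      (∀ x y : B, h (x ⊔ y) = h x ⊔ h y) ∧
      (∀ x y : B, h (x ⊓ y) = h x ⊓ h y) ∧
      (∀ x y : B, h (x * y) = h x * h y) ∧
      (∀ x y : B, h (IRL.ld x y) = IRL.ld (h x) (h y)) ∧
      (∀ x y : B, h (IRL.rd x y) = IRL.rd (h x) (h y)) ∧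
      h 1 = 1 ∧
      (∀ x y : C, k (x ⊔ y) = k x ⊔ k y) ∧
      (∀ x y : C, k (x ⊓ y) = k x ⊓ k y) ∧
      (∀ x y : C, k (x * y) = k x * k y) ∧
      (∀ x y : C, k (IRL.ld x y) = IRL.ld (k x) (k y)) ∧
      (∀ x y : C, k (IRL.rd x y) = IRL.rd (k x) (k y)) ∧
      k 1 = 1 ∧
      (∀ x ∈ F, h x = k (e x)) ∧
      Set.range h ∪ Set.range k = Set.univ ∧
      Set.range h ∩ Set.range k = h '' F ∧
      (∀ b : B, b ∉ F → ∀ c : C, c ∉ G → h b < k c) ∧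
      (∀ c : C, c ∉ G → ∀ g ∈ G, k c < k g) := by
  let S : IRL.GluingDatum B C :=
    { F, G, σ, γ, e
      compatible := ⟨hF, hstrict, hσ, hγ, habs⟩
      sup_notMem := hjoin
      lt_of_notMem := hCG
      bijOn := ⟨fun x hx => eimg ▸ Set.mem_image_of_mem e hx, fun x hx y hy => einj x hx y hy,
        eimg.ge⟩
      map_one := eone
      map_mul := emul
      map_ld := eld
      map_rd := erd
      map_sup := esup
      map_inf := einf }
  obtain ⟨D, _, h, k, hh, hk, hglue⟩ := gluing_over_filter_exists_general S
  exact ⟨D, _, h, k, hh.injective, hk.injective, hh.map_sup, hh.map_inf, hh.map_mul, hh.map_ld,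
    hh.map_rd, hh.map_one, hk.map_sup, hk.map_inf, hk.map_mul, hk.map_ld, hk.map_rd, hk.map_one,
    hglue⟩
end

section
/- (Failure of amalgamation for GL₂-chains.) There is no GL₂-chain amalgam of the V-formation (A, B, C) described in the context: for every GL₂-chain D and all injective maps h : B → D and k : C → D that are order-preserving and preserve ·, → and 1, it is impossible that h(a_B) = k(a_C). -/
/-- A `GL₂`-chain: a bounded commutative integral residuated chain that is 2-potent
(`x·x·x = x·x`) and satisfies `x = 1 ∨ x·(x ∧ y) ≤ (x ∧ y)²`. -/
class GL2Chain (α : Type*) extends LinearOrder α, CommMonoid α where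
  bot : α
  bot_le : ∀ x : α, bot ≤ x
  le_one : ∀ x : α, x ≤ 1
  himp : α → α → α
  mul_le_iff : ∀ x y z : α, x * y ≤ z ↔ y ≤ himp x z
  pot2 : ∀ x : α, x * x * x = x * x
  gl2 : ∀ x y : α, x = 1 ∨ x * min x y ≤ min x y * min x y

/-- Multiplication of the four-element GL₂-chain `B` with `0_B < a_B < b_B < 1_B`
(encoded as `0 < 1 < 2 < 3` in `Fin 4`): `x·y = min x y` except `b_B·b_B = a_B`. -/
def Bmul (x y : Fin 4) : Fin 4 := if x = 2 ∧ y = 2 then 1 else min x y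

/-- The residuum of `Bmul`. -/
def Bhimp (x y : Fin 4) : Fin 4 :=
  if x ≤ y then 3 else if x = 2 ∧ y = 1 then 2 else y

/-- Multiplication of the four-element Gödel chain `C` with `0_C < a_C < c_C < 1_C`
(encoded as `0 < 1 < 2 < 3` in `Fin 4`): `x·y = min x y`. -/
def Cmul (x y : Fin 4) : Fin 4 := min x y

/-- The residuum of `Cmul`. -/
def Chimp (x y : Fin 4) : Fin 4 := if x ≤ y then 3 else y

/-!
Put `b = b_B`, `c = c_C` and `a = b²`, which lies in `B` and in `C`. As `c ≠ 1`, the `GL₂` law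
in `D` gives `c · min c b ≤ (min c b)² ≤ b² = a`, that is, `min c b ≤ c → a`. As `c → a = a` in `C`,
this forces `c ≤ a` or `b ≤ a`. If `c ≤ a`, then `c → a = 1`, so `a = 1`. Either way `b ≤ a = b²`,
hence `b = b²`, which fails in `B`.
-/

namespace GL2Chain

variable {α : Type*} [GL2Chain α] {b c x y : α}

lemma gc_mul_himp (x : α) : GaloisConnection (x * ·) (himp x) := mul_le_iff x

instance : IsOrderedMonoid α where
  mul_le_mul_left _ _ hxy z := by
    simpa only [mul_comm z] using (gc_mul_himp z).monotone_l hxy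

lemma mul_self_le (x : α) : x * x ≤ x := mul_le_of_le_one_left' (le_one x)

lemma himp_eq_one_of_le (hxy : x ≤ y) : himp x y = 1 :=
  le_antisymm (le_one _) <| (mul_le_iff x 1 y).1 <| (mul_one x).trans_le hxy

lemma min_le_himp_mul_self (hc : c ≠ 1) (b : α) : min c b ≤ himp c (b * b) := by
  have hgl : c * min c b ≤ min c b * min c b := (gl2 c b).resolve_left hc
  have hmin : min c b * min c b ≤ b * b := mul_le_mul' (min_le_right c b) (min_le_right c b)
  exact (mul_le_iff _ _ _).1 (hgl.trans hmin)

lemma isIdempotentElem_of_himp_mul_self_eq (hc : c ≠ 1) (hcb : himp c (b * b) = b * b) :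
    IsIdempotentElem b := by
  refine le_antisymm (mul_self_le b) ?_
  have hmin : min c b ≤ b * b := (min_le_himp_mul_self hc b).trans_eq hcb
  rcases min_le_iff.1 hmin with hle | hle
  · have hbb : b * b = 1 := hcb.symm.trans (himp_eq_one_of_le hle)
    exact hbb ▸ le_one b
  · exact hle

end GL2Chain

theorem GL2_amalgamation_fails_general {D : Type*} [GL2Chain D] {h k : Fin 4 → D}
    (hinj : Function.Injective h)
    (hmul : ∀ x y : Fin 4, h (Bmul x y) = h x * h y)
    (kinj : Function.Injective k)
    (khimp : ∀ x y : Fin 4, k (Chimp x y) = GL2Chain.himp (k x) (k y)) :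
    h 1 ≠ k 1 := by
  intro hk
  have hbb : h 1 = h 2 * h 2 := hmul 2 2
  have kone : k 3 = 1 := (khimp 2 2).trans (GL2Chain.himp_eq_one_of_le le_rfl)
  have hc : k 2 ≠ 1 := kone ▸ kinj.ne (by decide)
  have hcb : GL2Chain.himp (k 2) (h 2 * h 2) = h 2 * h 2 := by
    rw [← hbb, hk]
    exact (khimp 2 1).symm
  have hb : h 2 * h 2 = h 2 := GL2Chain.isIdempotentElem_of_himp_mul_self_eq hc hcb
  exact hinj.ne (by decide) (hbb.trans hb)

/-- failure of amalgamation for GL₂-chains: there is no GL₂-chain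
amalgam of the V-formation `(A, B, C)`: for every GL₂-chain `D` and injective maps
`h : B → D`, `k : C → D` that are order-preserving and preserve `·`, `→` and `1`,
it is impossible that `h(a_B) = k(a_C)`. -/
theorem GL2_amalgamation_fails (D : Type) [GL2Chain D] (h k : Fin 4 → D)
    (hinj : Function.Injective h)
    (hmono : ∀ x y : Fin 4, x ≤ y → h x ≤ h y)
    (hmul : ∀ x y : Fin 4, h (Bmul x y) = h x * h y)
    (hhimp : ∀ x y : Fin 4, h (Bhimp x y) = GL2Chain.himp (h x) (h y))
    (hone : h 3 = 1)
    (kinj : Function.Injective k)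
    (kmono : ∀ x y : Fin 4, x ≤ y → k x ≤ k y)
    (kmul : ∀ x y : Fin 4, k (Cmul x y) = k x * k y)
    (khimp : ∀ x y : Fin 4, k (Chimp x y) = GL2Chain.himp (k x) (k y))
    (kone : k 3 = 1) :
    h 1 ≠ k 1 := by
  exact GL2_amalgamation_fails_general hinj hmul kinj khimp
end
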